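/- (Centralized model.) Let n ≥ 2, ε ∈ (0,1], and let q be an integer with q ≥ 300·√n/ε². Then the collision-based tester (K_q, 1/2), where K_q is the complete graph on q vertices (so all pairs among q i.i.d. samples are compared), is an (n,ε)-uniformity tester; in particular Θ(√n/ε²) samples suffice to test uniformity in the centralized model. -/

import Mathlib

open Finset

open Classical in
/-- Probability of the event `A` under the product distribution on `Ω = V → Fin n`,
where the coordinates are independent and each has law the probability vector `P`. -/
noncomputable def pr {V : Type*} [Fintype V] [DecidableEq V] {n : ℕ}
    (P : Fin n → ℝ) (A : (V → Fin n) → Prop) : ℝ :=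
  ∑ ω : V → Fin n, if A ω then ∏ v, P (ω v) else 0

/-- Expectation of `f` under the product distribution. -/
noncomputable def ex {V : Type*} [Fintype V] [DecidableEq V] {n : ℕ}
    (P : Fin n → ℝ) (f : (V → Fin n) → ℝ) : ℝ :=
  ∑ ω : V → Fin n, (∏ v, P (ω v)) * f ω

/-- Variance of `f` under the product distribution. -/
noncomputable def var {V : Type*} [Fintype V] [DecidableEq V] {n : ℕ}
    (P : Fin n → ℝ) (f : (V → Fin n) → ℝ) : ℝ :=
  ex P (fun ω => (f ω - ex P f) ^ 2)

/-- The collision count `Z(ω) = ∑_{{u,v} ∈ E} 1[ω u = ω v]`. -/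
noncomputable def collisions {V : Type*} [Fintype V] [DecidableEq V] {n : ℕ}
    (G : SimpleGraph V) [DecidableRel G.Adj] (ω : V → Fin n) : ℝ :=
  ∑ e ∈ G.edgeFinset,
    Sym2.lift ⟨fun u v => if ω u = ω v then (1 : ℝ) else 0,
      fun u v => by by_cases h : ω u = ω v <;> simp [h, eq_comm]⟩ e

/-- The number of edges `|E|` of the comparison graph. -/
def edgeCount {V : Type*} [Fintype V] [DecidableEq V]
    (G : SimpleGraph V) [DecidableRel G.Adj] : ℕ :=
  G.edgeFinset.card

/-- The number of ordered 2-paths `c(G) = ∑_v d(v)·(d(v) − 1)`. -/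
def twoPaths {V : Type*} [Fintype V]
    (G : SimpleGraph V) [DecidableRel G.Adj] : ℕ :=
  ∑ v, G.degree v * (G.degree v - 1)

/-- The collision-based tester `(G, τ)` is an `(n, ε)`-uniformity tester: with threshold
`T = |E|·(1+τε²)/n`, on the uniform vector the collision count satisfies `Z < T` with
probability at least `3/4`, and on every probability vector that is ε-far from uniform
(in ℓ₁) the collision count satisfies `Z ≥ T` with probability at least `3/4`. -/
def IsUniformityTester {V : Type*} [Fintype V] [DecidableEq V]
    (n : ℕ) (ε τ : ℝ) (G : SimpleGraph V) [DecidableRel G.Adj] : Prop :=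
  (3 / 4 ≤ pr (fun _ : Fin n => (1 : ℝ) / n)
      (fun ω : V → Fin n =>
        collisions G ω < (edgeCount G : ℝ) * (1 + τ * ε ^ 2) / n)) ∧
  (∀ P : Fin n → ℝ, (∀ i, 0 ≤ P i) → (∑ i, P i) = 1 →
    ε ≤ (∑ i, |P i - 1 / (n : ℝ)|) →
    3 / 4 ≤ pr P (fun ω : V → Fin n =>
      (edgeCount G : ℝ) * (1 + τ * ε ^ 2) / n ≤ collisions G ω))

/-!
Let `m` be the number of edges and `c` the number of ordered pairs of adjacent edges (2-paths), and
write `Sₖ = ∑ Pᵢᵏ`. The collision indicators of disjoint edges are independent, and those of two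
edges sharing a vertex have covariance `S₃ - S₂²`, so `Z` has mean `m S₂` and variance
`m (S₂ - S₂²) + c (S₃ - S₂²)`. Put `b = ‖P - U‖₂`. Then `S₂ = 1/n + b²`, while
`S₃ - S₂²`, the variance of `P(X)` for `X ∼ P`, is at most `(1/n + b) b²`. It vanishes for uniform
`P`; for `ε`-far `P`, Cauchy–Schwarz gives `b ≥ ε/√n`. In both cases the mean lies at distance of
order `m ε²/n` or `m b²` from the threshold, and Chebyshev's inequality concludes provided `m ε⁴`
dominates `n` and `m² ε²` dominates `c √n`. For the complete graph on `q` vertices `m ≈ q²/2` and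
`c ≤ 2 q m`, so both hold once `q` is a large multiple of `√n/ε²`.
-/

lemma apply_update_of_dependsOn_compl {ι α β : Type*} [DecidableEq ι] {f : (ι → α) → β} {i : ι}
    (hf : DependsOn f {i}ᶜ) (x : ι → α) (a : α) : f (Function.update x i a) = f x :=
  hf fun _ hj => Function.update_of_ne hj _ _

section ProductExpectation

variable {V : Type*} [Fintype V] [DecidableEq V] {n : ℕ} {P : Fin n → ℝ}

lemma ex_const (hP : ∑ i, P i = 1) (c : ℝ) : ex P (fun _ : V → Fin n => c) = c := by
  have hmass : ∑ ω : V → Fin n, ∏ v, P (ω v) = 1 := by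
    simpa [hP] using (prod_univ_sum (fun _ : V => univ) fun _ i => P i).symm
  rw [ex, ← sum_mul, hmass, one_mul]

lemma ex_sub (f g : (V → Fin n) → ℝ) : ex P (fun ω => f ω - g ω) = ex P f - ex P g := by
  simp only [ex, mul_sub, sum_sub_distrib]

lemma ex_const_mul (c : ℝ) (f : (V → Fin n) → ℝ) : ex P (fun ω => c * f ω) = c * ex P f := by
  simp only [ex, mul_sum, mul_left_comm c]

lemma ex_sum {ι : Type*} (s : Finset ι) (f : ι → (V → Fin n) → ℝ) :
    ex P (fun ω => ∑ a ∈ s, f a ω) = ∑ a ∈ s, ex P (f a) := by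
  simp only [ex, mul_sum]
  exact sum_comm

lemma var_eq_ex_sq_sub_sq_ex (hP : ∑ i, P i = 1) (f : (V → Fin n) → ℝ) :
    var P f = ex P (fun ω => f ω ^ 2) - ex P f ^ 2 := by
  have hexpand : ∀ ω, (f ω - ex P f) ^ 2 = f ω ^ 2 - (2 * ex P f * f ω - ex P f ^ 2) :=
    fun ω => by ring
  simp only [var, hexpand, ex_sub, ex_const_mul, ex_const hP]
  ring

lemma var_sum {ι : Type*} (hP : ∑ i, P i = 1) (s : Finset ι) (f : ι → (V → Fin n) → ℝ) :
    var P (fun ω => ∑ a ∈ s, f a ω)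
      = ∑ p ∈ s ×ˢ s, (ex P (fun ω => f p.1 ω * f p.2 ω) - ex P (f p.1) * ex P (f p.2)) := by
  simp only [var_eq_ex_sq_sub_sq_ex hP, sq, sum_mul_sum, ex_sum, sum_sub_distrib, sum_product]

lemma one_sub_var_div_sq_le_pr (hP0 : ∀ i, 0 ≤ P i) (hP : ∑ i, P i = 1)
    {A : (V → Fin n) → Prop} {f : (V → Fin n) → ℝ} {t : ℝ} (ht : 0 < t)
    (hA : ∀ ω, ¬ A ω → t ≤ |f ω - ex P f|) : 1 - var P f / t ^ 2 ≤ pr P A := by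
  have hex : ex P (fun ω => 1 - (t ^ 2)⁻¹ * (f ω - ex P f) ^ 2) = 1 - var P f / t ^ 2 := by
    rw [ex_sub, ex_const hP, ex_const_mul, ← var, inv_mul_eq_div]
  rw [← hex]
  refine sum_le_sum fun ω _ => ?_
  have hω : 0 ≤ ∏ v, P (ω v) := prod_nonneg fun v _ => hP0 _
  split_ifs with h
  · exact mul_le_of_le_one_right hω (sub_le_self _ (by positivity))
  · refine mul_nonpos_of_nonneg_of_nonpos hω ?_
    rw [sub_nonpos, inv_mul_eq_div, one_le_div (by positivity), ← sq_abs (f ω - ex P f)]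
    exact pow_le_pow_left₀ ht.le (hA ω h) 2

lemma three_quarters_le_pr_of_four_mul_var_le_sq (hP0 : ∀ i, 0 ≤ P i) (hP : ∑ i, P i = 1)
    {A : (V → Fin n) → Prop} {f : (V → Fin n) → ℝ} {t : ℝ} (ht : 0 < t)
    (hA : ∀ ω, ¬ A ω → t ≤ |f ω - ex P f|) (hvar : 4 * var P f ≤ t ^ 2) : 3 / 4 ≤ pr P A := by
  have hratio : var P f / t ^ 2 ≤ 1 / 4 := by
    rw [div_le_iff₀ (by positivity)]
    linarith
  linarith [one_sub_var_div_sq_le_pr hP0 hP ht hA]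

/-- Exchanging `ω v` with an independent fresh sample preserves the joint law. -/
lemma ex_eq_ex_sum_update (hP : ∑ i, P i = 1) (v : V) (f : (V → Fin n) → ℝ) :
    ex P f = ex P (fun ω => ∑ i, P i * f (Function.update ω v i)) := by
  let swap : (V → Fin n) × Fin n → (V → Fin n) × Fin n :=
    fun x => (Function.update x.1 v x.2, x.1 v)
  have hswap : Function.Involutive swap := fun x => by simp [swap]
  have hweight : ∀ (ω : V → Fin n) i,
      (∏ u, P (Function.update ω v i u)) * P (ω v) = (∏ u, P (ω u)) * P i := by
    intro ω i
    have hrest : ∏ u ∈ univ.erase v, P (Function.update ω v i u) = ∏ u ∈ univ.erase v, P (ω u) :=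
      prod_congr rfl fun u hu => by rw [Function.update_of_ne (ne_of_mem_erase hu)]
    rw [← mul_prod_erase univ _ (mem_univ v), ← mul_prod_erase univ (fun u => P (ω u)) (mem_univ v),
      hrest, Function.update_self]
    ring
  calc ex P f
      = ∑ x : (V → Fin n) × Fin n, (∏ u, P (x.1 u)) * P x.2 * f x.1 := by
        simp only [ex, Fintype.sum_prod_type, ← sum_mul, ← mul_sum, hP, mul_one]
    _ = ∑ x : (V → Fin n) × Fin n, (∏ u, P (x.1 u)) * P x.2 * f (Function.update x.1 v x.2) :=
        Fintype.sum_equiv hswap.toPerm _ _ fun x => by simp [swap, hweight]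
    _ = ex P (fun ω => ∑ i, P i * f (Function.update ω v i)) := by
        simp only [ex, Fintype.sum_prod_type, mul_sum, mul_assoc]

lemma ex_apply_mul_of_dependsOn_compl (hP : ∑ i, P i = 1) {v : V} (g : Fin n → ℝ)
    {f : (V → Fin n) → ℝ} (hf : DependsOn f {v}ᶜ) :
    ex P (fun ω => g (ω v) * f ω) = (∑ i, P i * g i) * ex P f := by
  rw [ex_eq_ex_sum_update hP v]
  simp only [Function.update_self, apply_update_of_dependsOn_compl hf, ← mul_assoc, ← sum_mul,
    ex_const_mul]

lemma ex_apply (hP : ∑ i, P i = 1) (v : V) (g : Fin n → ℝ) :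
    ex P (fun ω : V → Fin n => g (ω v)) = ∑ i, P i * g i := by
  rw [ex_eq_ex_sum_update hP v]
  simp only [Function.update_self, ex_const hP]

end ProductExpectation

section Collision

variable {V : Type*} {n : ℕ} {P : Fin n → ℝ}

/-- The collision indicator `1[ω u = ω v]` of a pair `e = {u, v}` of samples, so that the
collision count of a graph is its sum over the edges. -/
noncomputable def collision (e : Sym2 V) (ω : V → Fin n) : ℝ :=
  if (e.map ω).IsDiag then 1 else 0

lemma collision_mk (u v : V) (ω : V → Fin n) :
    collision s(u, v) ω = if ω u = ω v then 1 else 0 := by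
  simp [collision]

lemma collision_mul_self (e : Sym2 V) (ω : V → Fin n) :
    collision e ω * collision e ω = collision e ω := by
  simp [collision]

lemma dependsOn_collision (e : Sym2 V) :
    DependsOn (fun ω : V → Fin n => collision e ω) {v | v ∈ e} := by
  intro ω ω' h
  simp only [collision, Sym2.map_congr h]

variable [Fintype V] [DecidableEq V]

lemma collisions_eq_sum_collision (G : SimpleGraph V) [DecidableRel G.Adj] (ω : V → Fin n) :
    collisions G ω = ∑ e ∈ G.edgeFinset, collision e ω :=
  sum_congr rfl fun e _ => e.ind fun u v => by rw [Sym2.lift_mk, collision_mk]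

lemma ex_collision_mul_of_dependsOn_compl (hP : ∑ i, P i = 1) {u v : V} (huv : u ≠ v)
    {f : (V → Fin n) → ℝ} (hf : DependsOn f {v}ᶜ) :
    ex P (fun ω => collision s(u, v) ω * f ω) = ex P (fun ω => P (ω u) * f ω) := by
  rw [ex_eq_ex_sum_update hP v]
  simp [collision_mk, Function.update_of_ne huv, apply_update_of_dependsOn_compl hf]

lemma ex_collision (hP : ∑ i, P i = 1) {e : Sym2 V} (he : ¬ e.IsDiag) :
    ex P (collision e) = ∑ i, P i ^ 2 := by
  induction e with
  | h u v =>
    have h := ex_collision_mul_of_dependsOn_compl hP (Sym2.mk_isDiag_iff.not.1 he)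
      (f := fun _ => 1) fun _ _ _ => rfl
    simpa only [mul_one, ex_apply hP u P, ← sq] using h

lemma ex_collision_mul_collision_of_disjoint (hP : ∑ i, P i = 1) {e f : Sym2 V}
    (he : ¬ e.IsDiag) (hf : ¬ f.IsDiag) (hef : ∀ v ∈ e, v ∉ f) :
    ex P (fun ω => collision e ω * collision f ω) = (∑ i, P i ^ 2) ^ 2 := by
  induction e with
  | h u v =>
    have hindep : ∀ w ∉ f, DependsOn (fun ω : V → Fin n => collision f ω) {w}ᶜ := fun w hw =>
      (dependsOn_collision f).mono fun x hx hxw => hw (hxw ▸ hx)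
    rw [ex_collision_mul_of_dependsOn_compl hP (Sym2.mk_isDiag_iff.not.1 he)
        (hindep v (hef v (Sym2.mem_mk_right u v))),
      ex_apply_mul_of_dependsOn_compl hP P (hindep u (hef u (Sym2.mem_mk_left u v))),
      ex_collision hP hf]
    simp only [sq]

lemma ex_collision_mul_collision_of_mem (hP : ∑ i, P i = 1) {e f : Sym2 V}
    (he : ¬ e.IsDiag) (hf : ¬ f.IsDiag) (hef : e ≠ f) {u : V} (hue : u ∈ e) (huf : u ∈ f) :
    ex P (fun ω => collision e ω * collision f ω) = ∑ i, P i ^ 3 := by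
  obtain ⟨v, rfl⟩ := hue
  obtain ⟨w, rfl⟩ := huf
  rw [Sym2.mk_isDiag_iff] at he hf
  have hvw : v ≠ w := fun h => hef (h ▸ rfl)
  have hindep : DependsOn (fun ω : V → Fin n => collision s(u, w) ω) {v}ᶜ :=
    (dependsOn_collision s(u, w)).mono fun x hx hxv => by
      rcases Sym2.mem_iff.1 hx with rfl | rfl
      exacts [he hxv, hvw hxv.symm]
  have hcoord : DependsOn (fun ω : V → Fin n => P (ω u)) {w}ᶜ := fun _ _ h => congrArg P (h u hf)
  calc ex P (fun ω => collision s(u, v) ω * collision s(u, w) ω)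
      = ex P (fun ω => collision s(u, w) ω * P (ω u)) := by
        simp only [ex_collision_mul_of_dependsOn_compl hP he hindep, mul_comm]
    _ = ∑ i, P i * (P i * P i) := by
        rw [ex_collision_mul_of_dependsOn_compl hP hf hcoord, ex_apply hP u fun i => P i * P i]
    _ = ∑ i, P i ^ 3 := sum_congr rfl fun i _ => by ring

/-- A common vertex of two distinct edges is unique, so pairs of adjacent edges can be counted by
that vertex. -/
lemma card_adjacent_edges (G : SimpleGraph V) [DecidableRel G.Adj] :
    #{p ∈ G.edgeFinset.offDiag | ∃ v, v ∈ p.1 ∧ v ∈ p.2} = twoPaths G := by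
  have hunion : {p ∈ G.edgeFinset.offDiag | ∃ v, v ∈ p.1 ∧ v ∈ p.2}
      = univ.biUnion fun v => (G.incidenceFinset v).offDiag := by
    ext p
    simp only [mem_filter, mem_offDiag, mem_biUnion, mem_univ, true_and,
      G.incidenceFinset_eq_filter]
    grind
  have hdisj : ((univ : Finset V) : Set V).PairwiseDisjoint
      fun v => (G.incidenceFinset v).offDiag := by
    intro u _ v _ huv
    refine disjoint_left.2 fun p hu hv => ?_
    simp only [mem_offDiag, G.incidenceFinset_eq_filter, mem_filter] at hu hv
    exact hu.2.2 (Sym2.eq_of_ne_mem huv hu.1.2 hv.1.2 hu.2.1.2 hv.2.1.2)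
  rw [hunion, card_biUnion hdisj, twoPaths]
  simp only [offDiag_card, G.card_incidenceFinset_eq_degree, Nat.mul_sub_one]

lemma ex_collisions (hP : ∑ i, P i = 1) (G : SimpleGraph V) [DecidableRel G.Adj] :
    ex P (collisions G) = edgeCount G * ∑ i, P i ^ 2 := by
  simp only [funext (collisions_eq_sum_collision G), ex_sum]
  rw [sum_congr rfl fun e he => ex_collision hP (G.not_isDiag_of_mem_edgeFinset he), sum_const,
    nsmul_eq_mul, edgeCount]

lemma var_collisions (hP : ∑ i, P i = 1) (G : SimpleGraph V) [DecidableRel G.Adj] :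
    var P (collisions G) = edgeCount G * (∑ i, P i ^ 2 - (∑ i, P i ^ 2) ^ 2)
      + twoPaths G * (∑ i, P i ^ 3 - (∑ i, P i ^ 2) ^ 2) := by
  have hloop : ∀ e ∈ G.edgeFinset, ¬ e.IsDiag := fun e => G.not_isDiag_of_mem_edgeFinset
  let cov : Sym2 V × Sym2 V → ℝ := fun p =>
    ex P (fun ω => collision p.1 ω * collision p.2 ω) - ex P (collision p.1) * ex P (collision p.2)
  have hdiag : ∑ p ∈ G.edgeFinset.diag, cov p
      = edgeCount G * (∑ i, P i ^ 2 - (∑ i, P i ^ 2) ^ 2) := by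
    rw [sum_diag, edgeCount, ← nsmul_eq_mul, ← sum_const]
    refine sum_congr rfl fun e he => ?_
    simp only [cov, collision_mul_self, ex_collision hP (hloop e he), sq]
  have hoff : ∀ p ∈ G.edgeFinset.offDiag, cov p
      = if ∃ v, v ∈ p.1 ∧ v ∈ p.2 then ∑ i, P i ^ 3 - (∑ i, P i ^ 2) ^ 2 else 0 := by
    rintro ⟨e, f⟩ hp
    obtain ⟨he, hf, hef⟩ := mem_offDiag.1 hp
    simp only [cov, ex_collision hP (hloop e he), ex_collision hP (hloop f hf), ← sq]
    split_ifs with h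
    · obtain ⟨v, hve, hvf⟩ := h
      rw [ex_collision_mul_collision_of_mem hP (hloop e he) (hloop f hf) hef hve hvf]
    · rw [ex_collision_mul_collision_of_disjoint hP (hloop e he) (hloop f hf)
        fun v hve hvf => h ⟨v, hve, hvf⟩, sub_self]
  rw [funext (collisions_eq_sum_collision G), var_sum hP, ← diag_union_offDiag,
    sum_union (disjoint_diag_offDiag _), hdiag, sum_congr rfl hoff, ← sum_filter, sum_const,
    card_adjacent_edges, nsmul_eq_mul]

end Collision

section PowerSums

variable {ι : Type*} [Fintype ι] {P : ι → ℝ}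

lemma sq_sum_abs_le_card_mul_sum_sq (a : ι → ℝ) :
    (∑ i, |a i|) ^ 2 ≤ Fintype.card ι * ∑ i, a i ^ 2 := by
  simpa only [sq_abs, card_univ] using
    sq_sum_le_card_mul_sum_sq (s := univ) (f := fun i => |a i|)

lemma sum_mul_sq_sub_sq_sum_mul_le (hP : ∑ i, P i = 1) (a : ι → ℝ) (c : ℝ) :
    ∑ i, P i * a i ^ 2 - (∑ i, P i * a i) ^ 2 ≤ ∑ i, P i * (a i - c) ^ 2 := by
  have hexpand : ∑ i, P i * (a i - c) ^ 2
      = ∑ i, P i * a i ^ 2 - 2 * c * ∑ i, P i * a i + c ^ 2 := by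
    have hterm : ∀ i, P i * (a i - c) ^ 2 = P i * a i ^ 2 - 2 * c * (P i * a i) + P i * c ^ 2 :=
      fun i => by ring
    simp only [hterm, sum_add_distrib, sum_sub_distrib, ← mul_sum, ← sum_mul, hP, one_mul]
  linarith [sq_nonneg (∑ i, P i * a i - c)]

lemma sum_sq_eq_inv_card_add [Nonempty ι] (hP : ∑ i, P i = 1) :
    ∑ i, P i ^ 2 = 1 / Fintype.card ι + ∑ i, (P i - 1 / Fintype.card ι) ^ 2 := by
  have hcard : (Fintype.card ι : ℝ) ≠ 0 := Nat.cast_ne_zero.2 Fintype.card_ne_zero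
  simp only [sub_sq, sum_add_distrib, sum_sub_distrib, mul_assoc, ← mul_sum, ← sum_mul, hP,
    sum_const, card_univ, nsmul_eq_mul]
  field_simp
  ring

lemma sum_cube_sub_sq_sum_sq_le (hP : ∑ i, P i = 1) {b c : ℝ} (hb : 0 ≤ b)
    (hbP : ∑ i, (P i - c) ^ 2 = b ^ 2) :
    ∑ i, P i ^ 3 - (∑ i, P i ^ 2) ^ 2 ≤ (c + b) * b ^ 2 := by
  have hmax : ∀ i, P i ≤ c + b := fun i => by
    have hi : (P i - c) ^ 2 ≤ b ^ 2 :=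
      hbP ▸ single_le_sum (f := fun i => (P i - c) ^ 2) (fun j _ => sq_nonneg _) (mem_univ i)
    linarith [le_of_sq_le_sq hi hb]
  calc ∑ i, P i ^ 3 - (∑ i, P i ^ 2) ^ 2
      = ∑ i, P i * P i ^ 2 - (∑ i, P i * P i) ^ 2 := by simp only [pow_succ', pow_zero, mul_one]
    _ ≤ ∑ i, P i * (P i - c) ^ 2 := sum_mul_sq_sub_sq_sum_mul_le hP P c
    _ ≤ ∑ i, (c + b) * (P i - c) ^ 2 := by gcongr with i; exact hmax i
    _ = (c + b) * b ^ 2 := by rw [← mul_sum, hbP]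

end PowerSums

section Tester

variable {V : Type*} [Fintype V] [DecidableEq V] {n : ℕ} {ε τ : ℝ}

lemma three_quarters_le_pr_collisions_lt_of_uniform (G : SimpleGraph V) [DecidableRel G.Adj]
    (hn : n ≠ 0) (hE : 0 < edgeCount G) (hε : 0 < ε) (hτ : 0 < τ)
    (h : 4 * (edgeCount G * n) ≤ (τ * (edgeCount G * ε ^ 2)) ^ 2) :
    3 / 4 ≤ pr (fun _ : Fin n => (1 : ℝ) / n)
      (fun ω : V → Fin n => collisions G ω < edgeCount G * (1 + τ * ε ^ 2) / n) := by
  have hpow : ∀ k, ∑ _i : Fin n, ((1 : ℝ) / n) ^ (k + 1) = (1 / n) ^ k := fun k => by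
    rw [sum_const, card_univ, Fintype.card_fin, nsmul_eq_mul, pow_succ', ← mul_assoc,
      mul_one_div_cancel (Nat.cast_ne_zero.2 hn), one_mul]
  have hsum : ∑ _i : Fin n, (1 : ℝ) / n = 1 := by simpa using hpow 0
  have hsq : ∑ _i : Fin n, ((1 : ℝ) / n) ^ 2 = 1 / n := by simpa using hpow 1
  refine three_quarters_le_pr_of_four_mul_var_le_sq (fun _ => by positivity) hsum
    (f := collisions G) (t := τ * (edgeCount G * ε ^ 2) / n) (by positivity) (fun ω hω => ?_) ?_
  · rw [ex_collisions hsum, hsq]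
    refine le_trans ?_ (le_abs_self _)
    rw [le_sub_iff_add_le]
    convert not_lt.1 hω using 1
    ring
  · rw [var_collisions hsum, hsq, hpow 2, sub_self, mul_zero, add_zero]
    calc 4 * (edgeCount G * (1 / n - (1 / n) ^ 2)) ≤ 4 * (edgeCount G * (1 / n : ℝ)) := by
          gcongr
          exact sub_le_self _ (sq_nonneg _)
      _ = 4 * (edgeCount G * n) / (n : ℝ) ^ 2 := by field_simp
      _ ≤ (τ * (edgeCount G * ε ^ 2)) ^ 2 / (n : ℝ) ^ 2 := by gcongr
      _ = (τ * (edgeCount G * ε ^ 2) / n) ^ 2 := by rw [div_pow]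

lemma var_collisions_le (G : SimpleGraph V) [DecidableRel G.Adj] (hn : n ≠ 0) {P : Fin n → ℝ}
    (hP : ∑ i, P i = 1) {b : ℝ} (hb : 0 ≤ b) (hbP : ∑ i, (P i - 1 / (n : ℝ)) ^ 2 = b ^ 2) :
    var P (collisions G)
      ≤ edgeCount G * (1 / n + b ^ 2) + twoPaths G * ((1 / n + b) * b ^ 2) := by
  have : NeZero n := ⟨hn⟩
  have hsq : ∑ i, P i ^ 2 = 1 / n + b ^ 2 := by
    simpa only [Fintype.card_fin, hbP] using sum_sq_eq_inv_card_add hP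
  have hcube := sum_cube_sub_sq_sum_sq_le hP hb hbP
  rw [hsq] at hcube
  rw [var_collisions hP, hsq]
  gcongr
  exact sub_le_self _ (sq_nonneg _)

/-- Multiplied by `r ^ 4`, the conclusion for `b = ε / r` is `h`; the ratio of its two sides
decreases as `b` grows. -/
lemma four_mul_add_le_sq_of_le_mul {m c r b : ℝ} (hm : 0 ≤ m) (hc : 0 ≤ c) (hr : 0 < r)
    (hε : 0 < ε) (hεb : ε ≤ b * r)
    (h : 4 * (m * r ^ 2 * (1 + ε ^ 2) + c * ε ^ 2 * (1 + r * ε)) ≤ (τ * (m * ε ^ 2)) ^ 2) :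
    4 * (m * (1 / r ^ 2 + b ^ 2) + c * ((1 / r ^ 2 + b) * b ^ 2)) ≤ (τ * (m * b ^ 2)) ^ 2 := by
  obtain ⟨x, rfl⟩ : ∃ x, b = x / r := ⟨b * r, (mul_div_cancel_right₀ b hr.ne').symm⟩
  rw [div_mul_cancel₀ x hr.ne'] at hεb
  have hx : 0 < x := hε.trans_le hεb
  have hsq : (1 + x ^ 2) * ε ^ 4 ≤ (1 + ε ^ 2) * x ^ 4 := by
    have h2 : ε ^ 2 * (ε ^ 2 * x ^ 2) ≤ x ^ 2 * (ε ^ 2 * x ^ 2) := by gcongr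
    have h4 : ε ^ 4 ≤ x ^ 4 := by gcongr
    linarith
  have hcube : x ^ 2 * (1 + r * x) * ε ^ 4 ≤ ε ^ 2 * (1 + r * ε) * x ^ 4 := by
    have h2 : ε ^ 2 * (ε ^ 2 * x ^ 2) ≤ x ^ 2 * (ε ^ 2 * x ^ 2) := by gcongr
    have h3 : ε * (r * ε ^ 3 * x ^ 3) ≤ x * (r * ε ^ 3 * x ^ 3) := by gcongr
    linarith
  have hscaled : 4 * (m * r ^ 2 * (1 + x ^ 2) + c * (x ^ 2 * (1 + r * x)))
      ≤ (τ * (m * x ^ 2)) ^ 2 := by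
    refine le_of_mul_le_mul_right ?_ (pow_pos hε 4)
    calc 4 * (m * r ^ 2 * (1 + x ^ 2) + c * (x ^ 2 * (1 + r * x))) * ε ^ 4
        = 4 * (m * r ^ 2 * ((1 + x ^ 2) * ε ^ 4) + c * (x ^ 2 * (1 + r * x) * ε ^ 4)) := by ring
      _ ≤ 4 * (m * r ^ 2 * ((1 + ε ^ 2) * x ^ 4) + c * (ε ^ 2 * (1 + r * ε) * x ^ 4)) := by gcongr
      _ = 4 * (m * r ^ 2 * (1 + ε ^ 2) + c * ε ^ 2 * (1 + r * ε)) * x ^ 4 := by ring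
      _ ≤ (τ * (m * ε ^ 2)) ^ 2 * x ^ 4 := by gcongr
      _ = (τ * (m * x ^ 2)) ^ 2 * ε ^ 4 := by ring
  calc 4 * (m * (1 / r ^ 2 + (x / r) ^ 2) + c * ((1 / r ^ 2 + x / r) * (x / r) ^ 2))
      = 4 * (m * r ^ 2 * (1 + x ^ 2) + c * (x ^ 2 * (1 + r * x))) / r ^ 4 := by field_simp
    _ ≤ (τ * (m * x ^ 2)) ^ 2 / r ^ 4 := by gcongr
    _ = (τ * (m * (x / r) ^ 2)) ^ 2 := by field_simp

lemma three_quarters_le_pr_le_collisions_of_far (G : SimpleGraph V) [DecidableRel G.Adj]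
    (hn : n ≠ 0) (hE : 0 < edgeCount G) (hε : 0 < ε) (hτ0 : 0 ≤ τ) (hτ1 : τ < 1)
    (h : 4 * (edgeCount G * n * (1 + ε ^ 2) + twoPaths G * ε ^ 2 * (1 + √n * ε))
      ≤ ((1 - τ) * (edgeCount G * ε ^ 2)) ^ 2)
    {P : Fin n → ℝ} (hP0 : ∀ i, 0 ≤ P i) (hP : ∑ i, P i = 1)
    (hfar : ε ≤ ∑ i, |P i - 1 / (n : ℝ)|) :
    3 / 4 ≤ pr P (fun ω : V → Fin n =>
      edgeCount G * (1 + τ * ε ^ 2) / n ≤ collisions G ω) := by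
  have : NeZero n := ⟨hn⟩
  have hr2 : √n ^ 2 = n := Real.sq_sqrt n.cast_nonneg
  have hr : 0 < √n := Real.sqrt_pos.2 (by positivity)
  obtain ⟨b, hb, hbP⟩ : ∃ b : ℝ, 0 ≤ b ∧ ∑ i, (P i - 1 / (n : ℝ)) ^ 2 = b ^ 2 :=
    ⟨_, Real.sqrt_nonneg _, (Real.sq_sqrt (sum_nonneg fun i _ => sq_nonneg _)).symm⟩
  have hεn : ε ^ 2 ≤ n * b ^ 2 := by
    simpa only [Fintype.card_fin, hbP] using
      (pow_le_pow_left₀ hε.le hfar 2).trans (sq_sum_abs_le_card_mul_sum_sq _)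
  have hεb : ε ≤ b * √n := le_of_sq_le_sq (by rwa [mul_pow, hr2, mul_comm]) (by positivity)
  have hb_pos : 0 < b := pos_of_mul_pos_left (hε.trans_le hεb) hr.le
  have : 0 < 1 - τ := sub_pos.2 hτ1
  refine three_quarters_le_pr_of_four_mul_var_le_sq hP0 hP (f := collisions G)
    (t := (1 - τ) * (edgeCount G * b ^ 2)) (by positivity) (fun ω hω => ?_) ?_
  · have hthreshold : edgeCount G * (1 + τ * ε ^ 2) / n
        ≤ edgeCount G * (1 / n + b ^ 2) - (1 - τ) * (edgeCount G * b ^ 2) := by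
      calc edgeCount G * (1 + τ * ε ^ 2) / n
          ≤ edgeCount G * (1 + τ * (n * b ^ 2)) / (n : ℝ) := by gcongr
        _ = edgeCount G * (1 / n + b ^ 2) - (1 - τ) * (edgeCount G * b ^ 2) := by
          field_simp
          ring
    rw [ex_collisions hP, sum_sq_eq_inv_card_add hP, Fintype.card_fin, hbP]
    exact le_trans (by linarith [not_le.1 hω]) (neg_le_abs _)
  · have hvar := var_collisions_le G hn hP hb hbP
    have hgap := four_mul_add_le_sq_of_le_mul (τ := 1 - τ) (m := edgeCount G) (c := twoPaths G)
      (by positivity) (by positivity) hr hε hεb (by rwa [hr2])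
    rw [hr2] at hgap
    linarith

/-- Up to a factor `n ^ 2`, `huniform` and `hfar` compare four times a variance bound with the
squared distance from the mean to the threshold: for uniform samples, and for samples from a `P` at
the smallest `ℓ₂` distance `ε / √n` from uniform that an `ε`-far vector can have. -/
lemma isUniformityTester_of_le_sq (G : SimpleGraph V) [DecidableRel G.Adj]
    (hn : n ≠ 0) (hE : 0 < edgeCount G) (hε : 0 < ε) (hτ0 : 0 < τ) (hτ1 : τ < 1)
    (huniform : 4 * (edgeCount G * n) ≤ (τ * (edgeCount G * ε ^ 2)) ^ 2)
    (hfar : 4 * (edgeCount G * n * (1 + ε ^ 2) + twoPaths G * ε ^ 2 * (1 + √n * ε))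
      ≤ ((1 - τ) * (edgeCount G * ε ^ 2)) ^ 2) :
    IsUniformityTester n ε τ G :=
  ⟨three_quarters_le_pr_collisions_lt_of_uniform G hn hE hε hτ0 huniform, fun _ hP0 hP =>
    three_quarters_le_pr_le_collisions_of_far G hn hE hε hτ0.le hτ1 hfar hP0 hP⟩

lemma isUniformityTester_one_half_of_le (G : SimpleGraph V) [DecidableRel G.Adj]
    (hn : n ≠ 0) (hE : 0 < edgeCount G) (hε : 0 < ε)
    (h : 16 * (edgeCount G * n * (1 + ε ^ 2) + twoPaths G * ε ^ 2 * (1 + √n * ε))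
      ≤ (edgeCount G * ε ^ 2) ^ 2) :
    IsUniformityTester n ε (1 / 2) G := by
  have hmn : (edgeCount G * n : ℝ) ≤
      edgeCount G * n * (1 + ε ^ 2) + twoPaths G * ε ^ 2 * (1 + √n * ε) :=
    le_add_of_le_of_nonneg (le_mul_of_one_le_right (by positivity) (by simp [sq_nonneg]))
      (by positivity)
  exact isUniformityTester_of_le_sq G hn hE hε (by norm_num) (by norm_num) (by linarith)
    (by linarith)

end Tester

section Clique

variable {V : Type*} [Fintype V] [DecidableEq V]

lemma edgeCount_top :
    (edgeCount (⊤ : SimpleGraph V) : ℝ) = Fintype.card V * (Fintype.card V - 1) / 2 := by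
  rw [edgeCount, SimpleGraph.card_edgeFinset_top_eq_card_choose_two, Nat.cast_choose_two]

lemma twoPaths_le (G : SimpleGraph V) [DecidableRel G.Adj] :
    twoPaths G ≤ 2 * edgeCount G * Fintype.card V := by
  rw [edgeCount, ← G.sum_degrees_eq_twice_card_edges, sum_mul, twoPaths]
  gcongr with v
  exact (Nat.sub_le _ _).trans (G.degree_lt_card_verts v).le

lemma two_fifths_mul_sq_card_le_edgeCount_top (hV : (5 : ℝ) ≤ Fintype.card V) :
    2 / 5 * (Fintype.card V : ℝ) ^ 2 ≤ edgeCount (⊤ : SimpleGraph V) := by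
  rw [edgeCount_top]
  nlinarith

lemma sixteen_mul_le_mul_pow_four_of_sample_size {r q m ε : ℝ} (hr : 1 ≤ r) (hε0 : 0 < ε)
    (hε2 : ε ≤ 2) (hq0 : 0 ≤ q) (hq : 300 * r ≤ q * ε ^ 2) (hm : 2 / 5 * q ^ 2 ≤ m) :
    16 * (r ^ 2 * (1 + ε ^ 2) + 2 * q * ε ^ 2 * (1 + r * ε)) ≤ m * ε ^ 4 := by
  have hsq : 300 * r * (300 * r) ≤ q * ε ^ 2 * (q * ε ^ 2) := by gcongr
  have hmul : q * ε ^ 2 * (300 * r) ≤ q * ε ^ 2 * (q * ε ^ 2) := by gcongr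
  calc 16 * (r ^ 2 * (1 + ε ^ 2) + 2 * q * ε ^ 2 * (1 + r * ε))
    _ ≤ 16 * (r ^ 2 * (1 + 2 ^ 2) + 2 * q * ε ^ 2 * (r + r * 2)) := by gcongr
    _ = 80 / 300 ^ 2 * (300 * r * (300 * r)) + 96 / 300 * (q * ε ^ 2 * (300 * r)) := by ring
    _ ≤ 2 / 5 * (q * ε ^ 2 * (q * ε ^ 2)) := by
      linarith [mul_self_nonneg (q * ε ^ 2)]
    _ = 2 / 5 * q ^ 2 * ε ^ 4 := by ring
    _ ≤ m * ε ^ 4 := by gcongr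

theorem centralized_clique_tester_general {n : ℕ} (hn : n ≠ 0) {ε : ℝ} (hε0 : 0 < ε)
    (hε2 : ε ≤ 2) (hq : 300 * √n / ε ^ 2 ≤ Fintype.card V) :
    IsUniformityTester n ε (1 / 2) (⊤ : SimpleGraph V) := by
  set q : ℝ := (Fintype.card V : ℝ)
  have hr1 : 1 ≤ √n := Real.one_le_sqrt.2 (Nat.one_le_cast.2 (Nat.one_le_iff_ne_zero.2 hn))
  have hqε : 300 * √n ≤ q * ε ^ 2 := (div_le_iff₀ (by positivity)).1 hq
  have hq5 : 5 ≤ q := by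
    have : q * ε ^ 2 ≤ q * 2 ^ 2 := by gcongr
    linarith
  have hmq := two_fifths_mul_sq_card_le_edgeCount_top hq5
  have hvar := sixteen_mul_le_mul_pow_four_of_sample_size hr1 hε0 hε2 (by positivity) hqε hmq
  rw [Real.sq_sqrt n.cast_nonneg] at hvar
  have hE : 0 < edgeCount (⊤ : SimpleGraph V) :=
    Nat.cast_pos.1 (lt_of_lt_of_le (by positivity) hmq)
  refine isUniformityTester_one_half_of_le ⊤ hn hE hε0 ?_
  set m : ℝ := (edgeCount (⊤ : SimpleGraph V) : ℝ)
  have hpaths : (twoPaths (⊤ : SimpleGraph V) : ℝ) ≤ 2 * m * q := by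
    simpa using Nat.cast_le (α := ℝ).2 (twoPaths_le (⊤ : SimpleGraph V))
  calc 16 * (m * n * (1 + ε ^ 2) + twoPaths (⊤ : SimpleGraph V) * ε ^ 2 * (1 + √n * ε))
    _ ≤ 16 * (m * n * (1 + ε ^ 2) + 2 * m * q * ε ^ 2 * (1 + √n * ε)) := by gcongr
    _ = m * (16 * (n * (1 + ε ^ 2) + 2 * q * ε ^ 2 * (1 + √n * ε))) := by ring
    _ ≤ m * (m * ε ^ 4) := by gcongr
    _ = (m * ε ^ 2) ^ 2 := by ring

end Clique

/-- Centralized model: for `q ≥ 300√n/ε²`, the collision-based tester `(K_q, 1/2)`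
(comparing all pairs among `q` i.i.d. samples) is an `(n, ε)`-uniformity tester. -/
theorem centralized_clique_tester (n : ℕ) (hn : 2 ≤ n)
    (ε : ℝ) (hε0 : 0 < ε) (hε1 : ε ≤ 1)
    (q : ℕ) (hq : 300 * Real.sqrt n / ε ^ 2 ≤ (q : ℝ)) :
    IsUniformityTester n ε (1 / 2) (⊤ : SimpleGraph (Fin q)) :=
  centralized_clique_tester_general (by omega) hε0 (by linarith) (by simpa using hq)
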